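/- Under the energy-harvesting block-transmission model, let γ ∈ [0, Q·r_E] and p̄ = P(Ē_1 ≥ γ·μ_E), and assume p̄ > 0. Then for every r in the interval (0, 1/η_U], the estimation error satisfies P(ε < err_II) ≥ 1 − f_bt(μ_II, ϱ_II, r), where err_II = P_x / (1 + (1/σ_w²)·(1/Q)·p̄·γ·μ_E·(1/η_U − r)), μ_II = (1/η_L)·max{1/p̄ − 1, 1}·min{Q·η_U, 1}, and ϱ_II = (1/η_L²)·(1/p̄ − 1)·min{Q·η_U, 1}. -/

import Mathlib

open Matrix Finset MeasureTheory ProbabilityTheory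

/-- Squared Euclidean norm of `u_i`, the conjugate transpose of the `i`-th row of `Us`. -/
noncomputable def rowNormSq {N s : ℕ} (Us : Matrix (Fin N) (Fin s) ℂ) (i : Fin N) : ℝ :=
  ∑ j, ‖Us i j‖ ^ 2

/-- The (0-based) global index `(k−1)·Q + t` of sample `t` of block `k`. -/
def blockIdx (nT Q : ℕ) (k : Fin nT) (t : Fin Q) : Fin (nT * Q) := finProdFinEquiv (k, t)

/-- The block containing global index `i`. -/
def blockOf (nT Q : ℕ) (i : Fin (nT * Q)) : Fin nT := (finProdFinEquiv.symm i).1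

/-- `h(a) = (1+a)·log(1+a) − a`. -/
noncomputable def hfun (a : ℝ) : ℝ := (1 + a) * Real.log (1 + a) - a

/-- `f_bt(μ, ϱ, r) = 2s·exp(−(ϱ/μ²)·h(μ·r/ϱ))`. -/
noncomputable def fbt (s : ℕ) (μ ϱ r : ℝ) : ℝ :=
  2 * s * Real.exp (-(ϱ / μ ^ 2) * hfun (μ * r / ϱ))

/-!
The precision matrix is `(s / P_x) (1 + (σ_w² Q)⁻¹ ∑ₖ Ēₖ Aₖ)`, where `Aₖ` is the Gram matrix of the
rows in block `k` rescaled to trace `Q`, so that `∑ₖ Aₖ ≥ 1 / η_U`. Bounding `Ēₖ` below by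
`p̄ γ μ_E (1 - ξₖ)` with `ξₖ = 1 - 1{Ēₖ ≥ γ μ_E} / p̄`, which is centred, the claim reduces to
`∑ₖ ξₖ Aₖ < r` with high probability: on that event the precision matrix strictly exceeds
`s / err_II` times the identity. The tail bound is a matrix Bennett inequality. The Golden–Thompson
inequality, a consequence of a trace inequality for powers of two and the Lie–Trotter product
formula, splits off one independent summand at a time from `E tr exp (∑ₖ Yₖ)`, where `Yₖ` is
`θ ξₖ Aₖ` minus the quadratic correction that makes `E exp Yₖ ≤ 1`.
-/

open scoped ComplexOrder MatrixOrder

section TracePowers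

variable {n : Type*} [Fintype n]

lemma two_mul_re_trace_conjTranspose_mul_le (A B : Matrix n n ℂ) :
    2 * (Aᴴ * B).trace.re ≤ (Aᴴ * A).trace.re + (Bᴴ * B).trace.re := by
  have hnonneg : 0 ≤ ((A - B)ᴴ * (A - B)).trace.re :=
    (Complex.le_def.1 (posSemidef_conjTranspose_mul_self (A - B)).trace_nonneg).1
  have hsymm : (Bᴴ * A).trace.re = (Aᴴ * B).trace.re := by
    rw [← conjTranspose_conjTranspose A, ← conjTranspose_mul, trace_conjTranspose,
      conjTranspose_conjTranspose, Complex.star_def, Complex.conj_re]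
  simp only [conjTranspose_sub, sub_mul, mul_sub, trace_sub, Complex.sub_re] at hnonneg
  linarith

variable [DecidableEq n]

lemma trace_mul_pow_comm {R : Type*} [CommRing R] (A B : Matrix n n R) (m : ℕ) :
    ((A * B) ^ m).trace = ((B * A) ^ m).trace := by
  cases m with
  | zero => simp only [pow_zero]
  | succ m =>
    have hsemiconj : SemiconjBy A (B * A) (A * B) := (mul_assoc A B A).symm
    have hpow : (A * B) ^ m * A = A * (B * A) ^ m := (hsemiconj.pow_right m).eq.symm
    rw [pow_succ, ← mul_assoc, hpow, mul_assoc, trace_mul_comm, mul_assoc, ← pow_succ]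

/-- The two inequalities are proved together because at level `j + 1` each follows from both at
level `j`: the first from the pair `X† X`, `X X†`, the second from `X = A B`. -/
lemma re_trace_pow_two_pow_le_and (j : ℕ) :
    (∀ X : Matrix n n ℂ, (X ^ 2 ^ (j + 1)).trace.re ≤ ((Xᴴ * X) ^ 2 ^ j).trace.re) ∧
    (∀ A B : Matrix n n ℂ, A.IsHermitian → B.IsHermitian →
      ((A * B) ^ 2 ^ j).trace.re ≤ (A ^ 2 ^ j * B ^ 2 ^ j).trace.re) := by
  induction j with
  | zero =>
    refine ⟨fun X => ?_, fun A B _ _ => by simp only [pow_zero, pow_one, le_refl]⟩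
    have hamgm := two_mul_re_trace_conjTranspose_mul_le Xᴴ X
    rw [conjTranspose_conjTranspose, trace_mul_comm X Xᴴ, ← pow_two] at hamgm
    simp only [zero_add, pow_one, pow_zero]
    linarith
  | succ j ih =>
    obtain ⟨ih_schur, ih_mul⟩ := ih
    refine ⟨fun X => ?_, fun A B hA hB => ?_⟩
    · have hL : (Xᴴ * X).IsHermitian := isHermitian_conjTranspose_mul_self X
      have hR : (X * Xᴴ).IsHermitian := isHermitian_mul_conjTranspose_self X
      have hamgm := two_mul_re_trace_conjTranspose_mul_le ((Xᴴ * X) ^ 2 ^ j) ((X * Xᴴ) ^ 2 ^ j)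
      rw [(hL.pow _).eq, (hR.pow _).eq, ← pow_add, ← pow_add, trace_mul_pow_comm X Xᴴ,
        ← two_mul (2 ^ j), ← pow_succ'] at hamgm
      calc (X ^ 2 ^ (j + 1 + 1)).trace.re
          = ((X ^ 2) ^ 2 ^ (j + 1)).trace.re := by rw [← pow_mul, ← pow_succ']
        _ ≤ (((X ^ 2)ᴴ * X ^ 2) ^ 2 ^ j).trace.re := ih_schur _
        _ = ((Xᴴ * X * (X * Xᴴ)) ^ 2 ^ j).trace.re := by
          rw [conjTranspose_pow, pow_two, pow_two, mul_assoc, trace_mul_pow_comm]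
          simp only [mul_assoc]
        _ ≤ ((Xᴴ * X) ^ 2 ^ j * (X * Xᴴ) ^ 2 ^ j).trace.re := ih_mul _ _ hL hR
        _ ≤ ((Xᴴ * X) ^ 2 ^ (j + 1)).trace.re := by linarith
    · calc ((A * B) ^ 2 ^ (j + 1)).trace.re
          ≤ (((A * B)ᴴ * (A * B)) ^ 2 ^ j).trace.re := ih_schur _
        _ = ((A ^ 2 * B ^ 2) ^ 2 ^ j).trace.re := by
          rw [conjTranspose_mul, hA.eq, hB.eq, mul_assoc, trace_mul_pow_comm]
          simp only [pow_two, mul_assoc]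
        _ ≤ ((A ^ 2) ^ 2 ^ j * (B ^ 2) ^ 2 ^ j).trace.re := ih_mul _ _ (hA.pow 2) (hB.pow 2)
        _ = (A ^ 2 ^ (j + 1) * B ^ 2 ^ (j + 1)).trace.re := by
          rw [← pow_mul, ← pow_mul, ← pow_succ']

end TracePowers

section LieProduct

open NormedSpace Filter Topology

lemma norm_pow_sub_pow_le {𝔸 : Type*} [NormedRing 𝔸] [NormOneClass 𝔸] {x y : 𝔸} {M : ℝ}
    (hM : 1 ≤ M) (hx : ‖x‖ ≤ M) (hy : ‖y‖ ≤ M) (m : ℕ) :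
    ‖x ^ m - y ^ m‖ ≤ m * M ^ m * ‖x - y‖ := by
  induction m with
  | zero => simp
  | succ m ih =>
    calc ‖x ^ (m + 1) - y ^ (m + 1)‖
        = ‖(x ^ m - y ^ m) * x + y ^ m * (x - y)‖ := by
          rw [pow_succ x, pow_succ y]; noncomm_ring
      _ ≤ ‖x ^ m - y ^ m‖ * ‖x‖ + ‖y ^ m‖ * ‖x - y‖ :=
          (norm_add_le _ _).trans (add_le_add (norm_mul_le _ _) (norm_mul_le _ _))
      _ ≤ m * M ^ m * ‖x - y‖ * M + M ^ (m + 1) * ‖x - y‖ := by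
          gcongr
          exact (norm_pow_le _ _).trans ((pow_le_pow_left₀ (norm_nonneg _) hy m).trans
            (pow_le_pow_right₀ hM m.le_succ))
      _ = (m + 1 : ℕ) * M ^ (m + 1) * ‖x - y‖ := by push_cast; ring

variable {𝔸 : Type*} [NormedRing 𝔸] [NormedAlgebra ℝ 𝔸]

lemma norm_exp_le_exp_norm [NormOneClass 𝔸] (x : 𝔸) : ‖exp x‖ ≤ Real.exp ‖x‖ := by
  rw [exp_eq_tsum ℝ, Real.exp_eq_exp_ℝ, exp_eq_tsum_div]
  refine tsum_of_norm_bounded (Real.summable_pow_div_factorial ‖x‖).hasSum fun k => ?_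
  rw [norm_smul, norm_inv, RCLike.norm_natCast, div_eq_inv_mul]
  gcongr
  exact norm_pow_le _ _

variable [CompleteSpace 𝔸]

lemma hasDerivAt_exp_smul_add_sub_exp_smul_mul_exp_smul (a b : 𝔸) :
    HasDerivAt (fun t : ℝ => exp (t • (a + b)) - exp (t • a) * exp (t • b)) 0 0 := by
  have h := (hasDerivAt_exp_smul_const (𝕂 := ℝ) (a + b) (0 : ℝ)).sub
    ((hasDerivAt_exp_smul_const (𝕂 := ℝ) a (0 : ℝ)).mul
      (hasDerivAt_exp_smul_const (𝕂 := ℝ) b (0 : ℝ)))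
  simp only [zero_smul, exp_zero, one_mul, mul_one, sub_self] at h
  exact h

lemma exp_inv_natCast_smul_pow (a : 𝔸) {m : ℕ} (hm : m ≠ 0) :
    exp ((m : ℝ)⁻¹ • a) ^ m = exp a := by
  let _ : NormedAlgebra ℚ 𝔸 := NormedAlgebra.restrictScalars ℚ ℝ 𝔸
  rw [← NormedSpace.exp_nsmul, ← Nat.cast_smul_eq_nsmul ℝ, smul_smul,
    mul_inv_cancel₀ (Nat.cast_ne_zero.2 hm), one_smul]

variable [NormOneClass 𝔸]

lemma norm_exp_smul_mul_exp_smul_pow_sub_le (a b : 𝔸) {m : ℕ} (hm : m ≠ 0) :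
    ‖(exp ((m : ℝ)⁻¹ • a) * exp ((m : ℝ)⁻¹ • b)) ^ m - exp (a + b)‖ ≤
      Real.exp (‖a‖ + ‖b‖) * (m * ‖exp ((m : ℝ)⁻¹ • (a + b)) -
        exp ((m : ℝ)⁻¹ • a) * exp ((m : ℝ)⁻¹ • b)‖) := by
  have hnorm (c : 𝔸) : ‖exp ((m : ℝ)⁻¹ • c)‖ ≤ Real.exp ((m : ℝ)⁻¹ * ‖c‖) := by
    simpa only [norm_smul, norm_inv, RCLike.norm_natCast] using norm_exp_le_exp_norm ((m : ℝ)⁻¹ • c)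
  have hsum : ‖exp ((m : ℝ)⁻¹ • (a + b))‖ ≤ Real.exp ((m : ℝ)⁻¹ * (‖a‖ + ‖b‖)) :=
    (hnorm _).trans (by gcongr; exact norm_add_le a b)
  have hprod : ‖exp ((m : ℝ)⁻¹ • a) * exp ((m : ℝ)⁻¹ • b)‖ ≤
      Real.exp ((m : ℝ)⁻¹ * (‖a‖ + ‖b‖)) := by
    rw [mul_add, Real.exp_add]
    exact (norm_mul_le _ _).trans (by gcongr <;> exact hnorm _)
  rw [← exp_inv_natCast_smul_pow (a + b) hm]
  refine (norm_pow_sub_pow_le (Real.one_le_exp (by positivity)) hprod hsum m).trans_eq ?_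
  rw [← Real.exp_nat_mul, mul_inv_cancel_left₀ (Nat.cast_ne_zero.2 hm), norm_sub_rev]
  ring

lemma tendsto_exp_smul_mul_exp_smul_pow (a b : 𝔸) :
    Tendsto (fun m : ℕ => (exp ((m : ℝ)⁻¹ • a) * exp ((m : ℝ)⁻¹ • b)) ^ m) atTop
      (𝓝 (exp (a + b))) := by
  have hinv : Tendsto (fun m : ℕ => (m : ℝ)⁻¹) atTop (𝓝[≠] 0) :=
    tendsto_nhdsWithin_iff.2 ⟨tendsto_inv_atTop_nhds_zero_nat,
      (eventually_ne_atTop 0).mono fun m hm => inv_ne_zero (Nat.cast_ne_zero.2 hm)⟩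
  have hslope := ((hasDerivAt_iff_tendsto_slope.1
    (hasDerivAt_exp_smul_add_sub_exp_smul_mul_exp_smul a b)).comp hinv).norm.const_mul
      (Real.exp (‖a‖ + ‖b‖))
  rw [norm_zero, mul_zero] at hslope
  rw [tendsto_iff_norm_sub_tendsto_zero]
  refine squeeze_zero' (Eventually.of_forall fun m => norm_nonneg _) ?_ hslope
  filter_upwards [eventually_ne_atTop 0] with m hm
  refine (norm_exp_smul_mul_exp_smul_pow_sub_le a b hm).trans_eq ?_
  simp [slope_def_module, norm_smul]

end LieProduct

section GoldenThompsonInequality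

open NormedSpace Filter Topology
open scoped Matrix.Norms.L2Operator

variable {n : Type*} [Fintype n] [DecidableEq n]

theorem golden_thompson {H K : Matrix n n ℂ} (hH : H.IsHermitian) (hK : K.IsHermitian) :
    (exp (H + K)).trace.re ≤ (exp H * exp K).trace.re := by
  cases isEmpty_or_nonempty n
  · rw [Subsingleton.elim (exp (H + K)) (exp H * exp K)]
  have hcont : Continuous fun X : Matrix n n ℂ => X.trace.re :=
    Complex.continuous_re.comp continuous_id.matrix_trace
  have hlim := ((hcont.tendsto _).comp (tendsto_exp_smul_mul_exp_smul_pow H K)).comp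
    (tendsto_pow_atTop_atTop_of_one_lt one_lt_two)
  refine le_of_tendsto hlim (Eventually.of_forall fun j => ?_)
  have hherm {X : Matrix n n ℂ} (hX : X.IsHermitian) :
      (exp (((2 ^ j : ℕ) : ℝ)⁻¹ • X)).IsHermitian :=
    (hX.smul (IsSelfAdjoint.all _)).exp
  have hmul := (re_trace_pow_two_pow_le_and j).2 _ _ (hherm hH) (hherm hK)
  rwa [exp_inv_natCast_smul_pow _ (by positivity), exp_inv_natCast_smul_pow _ (by positivity)]
    at hmul

end GoldenThompsonInequality

section Loewner

open NormedSpace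
open scoped Matrix.Norms.L2Operator

variable {n : Type*} [Fintype n]

lemma re_trace_mul_nonneg {A B : Matrix n n ℂ} (hA : 0 ≤ A) (hB : 0 ≤ B) :
    0 ≤ (A * B).trace.re := by
  classical
  obtain ⟨C, rfl⟩ := CStarAlgebra.nonneg_iff_eq_star_mul_self.1 hA
  rw [mul_assoc, trace_mul_comm]
  exact (Complex.le_def.1
    ((nonneg_iff_posSemidef.1 hB).mul_mul_conjTranspose_same C).trace_nonneg).1

lemma re_trace_mul_le_re_trace_mul {P A B : Matrix n n ℂ} (hP : 0 ≤ P) (hAB : A ≤ B) :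
    (P * A).trace.re ≤ (P * B).trace.re := by
  have h := re_trace_mul_nonneg hP (sub_nonneg.2 hAB)
  rwa [mul_sub, trace_sub, Complex.sub_re, sub_nonneg] at h

lemma re_trace_mul_pos [Nonempty n] {A B : Matrix n n ℂ} (hA : A.PosDef) (hB : B.PosDef) :
    0 < (A * B).trace.re := by
  classical
  obtain ⟨C, hC, rfl⟩ := CStarAlgebra.isStrictlyPositive_iff_eq_star_mul_self.1
    (isStrictlyPositive_iff_posDef.2 hA)
  rw [mul_assoc, trace_mul_comm]
  refine (Complex.lt_def.1 (hB.mul_mul_conjTranspose_same ?_).trace_pos).1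
  exact vecMul_injective_of_isUnit hC

variable [DecidableEq n]

lemma re_trace_inv_lt_of_posDef_sub_smul_one [Nonempty n] {A : Matrix n n ℂ} {c : ℝ} (hc : 0 < c)
    (hA : (A - c • 1).PosDef) : A⁻¹.trace.re < Fintype.card n / c := by
  have hApos : A.PosDef := by
    have h := hA.add (Matrix.PosDef.one.smul hc)
    rwa [sub_add_cancel] at h
  have h := re_trace_mul_pos hApos.inv hA
  rw [mul_sub, nonsing_inv_mul _ ((isUnit_iff_isUnit_det A).1 hApos.isUnit), mul_smul_comm, mul_one,
    trace_sub, trace_one, trace_smul, Complex.sub_re, Complex.smul_re, Complex.natCast_re,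
    smul_eq_mul, sub_pos] at h
  rwa [lt_div_iff₀ hc, mul_comm]

lemma le_re_trace_smul_one {A : Matrix n n ℂ} (hA : 0 ≤ A) : A ≤ A.trace.re • 1 := by
  have hpsd := nonneg_iff_posSemidef.1 hA
  rw [← Algebra.algebraMap_eq_smul_one, le_algebraMap_iff_spectrum_le (R := ℝ) (ha := hpsd.1)]
  intro x hx
  obtain ⟨i, rfl⟩ := hpsd.1.spectrum_real_eq_range_eigenvalues ▸ hx
  rw [hpsd.1.trace_eq_sum_eigenvalues, Complex.re_sum]
  exact Finset.single_le_sum (f := hpsd.1.eigenvalues) (fun j _ => hpsd.eigenvalues_nonneg j)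
    (Finset.mem_univ i)

lemma mul_self_le_smul_of_nonneg_of_le_smul_one {A : Matrix n n ℂ} {M : ℝ} (hA : 0 ≤ A)
    (hAM : A ≤ M • 1) : A * A ≤ M • A := by
  have h := Commute.mul_nonneg hA (sub_nonneg.2 hAM)
    (((Commute.one_right A).smul_right M).sub_right (Commute.refl A))
  rwa [mul_sub, mul_smul_comm, mul_one, sub_nonneg] at h

lemma posDef_smul_one_sub_of_re_trace_exp_lt {H : Matrix n n ℂ} (hH : IsSelfAdjoint H) {a : ℝ}
    (ha : (exp H).trace.re < Real.exp a) : (a • (1 : Matrix n n ℂ) - H).PosDef := by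
  have hle := le_re_trace_smul_one (IsSelfAdjoint.exp_nonneg hH)
  rw [← Algebra.algebraMap_eq_smul_one, ← CFC.real_exp_eq_normedSpace_exp hH] at hle
  have hexp_le := (cfc_le_algebraMap_iff Real.exp _ H).1 hle
  have hspec : ∀ x ∈ spectrum ℝ H, 0 < a - x := fun x hx => sub_pos.2 (Real.exp_lt_exp.1
    ((hexp_le x hx).trans_lt (CFC.real_exp_eq_normedSpace_exp hH ▸ ha)))
  rw [← isStrictlyPositive_iff_posDef, ← Algebra.algebraMap_eq_smul_one]
  have hcfc : cfc (fun x => a - x) H = algebraMap ℝ (Matrix n n ℂ) a - H := by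
    rw [cfc_sub (fun _ : ℝ => a) (fun x => x) H, cfc_const a H, cfc_id' ℝ H]
  rw [← hcfc]
  exact (cfc_isStrictlyPositive_iff _ H).2 hspec

end Loewner

section ScalarBennett

lemma hasSum_exp_sub_one_sub (x : ℝ) :
    HasSum (fun k : ℕ => x ^ (k + 2) / ((k + 2).factorial : ℝ)) (Real.exp x - 1 - x) := by
  have h := NormedSpace.expSeries_div_hasSum_exp x
  rw [← Real.exp_eq_exp_ℝ] at h
  simpa [Finset.sum_range_succ, sub_sub] using (hasSum_nat_add_iff' 2).2 h

lemma exp_le_quadratic_of_nonpos {x : ℝ} (hx : x ≤ 0) : Real.exp x ≤ 1 + x + x ^ 2 / 2 := by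
  have hneg := Real.quadratic_le_exp_of_nonneg (neg_nonneg.2 hx)
  have hpos : 0 < 1 + x + x ^ 2 / 2 := by nlinarith [sq_nonneg (x + 1)]
  have hone : 1 ≤ (1 + x + x ^ 2 / 2) * Real.exp (-x) :=
    calc 1 ≤ (1 + x + x ^ 2 / 2) * (1 + -x + (-x) ^ 2 / 2) := by nlinarith [sq_nonneg (x ^ 2)]
      _ ≤ (1 + x + x ^ 2 / 2) * Real.exp (-x) := by gcongr
  rwa [Real.exp_neg, ← div_eq_mul_inv, one_le_div (Real.exp_pos x)] at hone

lemma sq_mul_exp_sub_one_sub_le {x c : ℝ} (hc : 0 ≤ c) (hx : x ≤ c) :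
    c ^ 2 * (Real.exp x - 1 - x) ≤ x ^ 2 * (Real.exp c - 1 - c) := by
  rcases le_total 0 x with hx0 | hx0
  · refine hasSum_le (fun k => ?_) ((hasSum_exp_sub_one_sub x).mul_left (c ^ 2))
      ((hasSum_exp_sub_one_sub c).mul_left (x ^ 2))
    calc c ^ 2 * (x ^ (k + 2) / (k + 2).factorial)
        = c ^ 2 * x ^ 2 * (x ^ k / (k + 2).factorial) := by ring
      _ ≤ c ^ 2 * x ^ 2 * (c ^ k / (k + 2).factorial) := by gcongr
      _ = x ^ 2 * (c ^ (k + 2) / (k + 2).factorial) := by ring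
  · calc c ^ 2 * (Real.exp x - 1 - x) ≤ c ^ 2 * (x ^ 2 / 2) := by
          gcongr; linarith [exp_le_quadratic_of_nonpos hx0]
      _ = x ^ 2 * (c ^ 2 / 2) := by ring
      _ ≤ x ^ 2 * (Real.exp c - 1 - c) := by
          gcongr; linarith [Real.quadratic_le_exp_of_nonneg hc]

/-- The coefficient `(e^(θL) - 1 - θL) / L²` of the variance in Bennett's bound for the moment
generating function at `θ` of a centred random variable that is at most `L`. -/
noncomputable def bennettCoeff (θ L : ℝ) : ℝ := (Real.exp (θ * L) - 1 - θ * L) / L ^ 2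

lemma bennettCoeff_nonneg (θ L : ℝ) : 0 ≤ bennettCoeff θ L :=
  div_nonneg (by linarith [Real.add_one_le_exp (θ * L)]) (sq_nonneg L)

lemma exp_mul_le_one_add_add_bennettCoeff_mul_sq {θ L y : ℝ} (hθ : 0 < θ) (hL : 0 < L)
    (hy : y ≤ L) : Real.exp (θ * y) ≤ 1 + θ * y + bennettCoeff θ L * y ^ 2 := by
  have h := sq_mul_exp_sub_one_sub_le (mul_pos hθ hL).le (mul_le_mul_of_nonneg_left hy hθ.le)
  rw [mul_pow, mul_pow, mul_assoc, mul_assoc, mul_le_mul_iff_right₀ (by positivity)] at h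
  have hdiv : Real.exp (θ * y) - 1 - θ * y ≤ bennettCoeff θ L * y ^ 2 := by
    rw [bennettCoeff, div_mul_eq_mul_div, le_div_iff₀ (by positivity)]
    linarith
  linarith

lemma integral_exp_mul_le_exp_bennettCoeff {Ω : Type*} [MeasurableSpace Ω] {P : Measure Ω}
    [IsProbabilityMeasure P] {X : Ω → ℝ} {θ L : ℝ} (hθ : 0 < θ) (hL : 0 < L) (hX : MemLp X 2 P)
    (hmean : ∫ ω, X ω ∂P = 0) (hXL : ∀ᵐ ω ∂P, X ω ≤ L) :
    ∫ ω, Real.exp (θ * X ω) ∂P ≤ Real.exp (bennettCoeff θ L * ∫ ω, X ω ^ 2 ∂P) := by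
  have hlin : Integrable (fun ω => 1 + θ * X ω) P :=
    (integrable_const 1).add ((hX.integrable one_le_two).const_mul θ)
  have hquad : Integrable (fun ω => bennettCoeff θ L * X ω ^ 2) P := hX.integrable_sq.const_mul _
  calc ∫ ω, Real.exp (θ * X ω) ∂P
      ≤ ∫ ω, (1 + θ * X ω + bennettCoeff θ L * X ω ^ 2) ∂P :=
        integral_mono_of_nonneg (ae_of_all _ fun ω => (Real.exp_pos _).le) (hlin.add hquad)
          (hXL.mono fun ω hω => exp_mul_le_one_add_add_bennettCoeff_mul_sq hθ hL hω)
    _ = bennettCoeff θ L * ∫ ω, X ω ^ 2 ∂P + 1 := by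
        rw [integral_add hlin hquad, integral_add (integrable_const 1)
          ((hX.integrable one_le_two).const_mul θ), integral_const_mul, integral_const_mul, hmean]
        simp [add_comm]
    _ ≤ Real.exp (bennettCoeff θ L * ∫ ω, X ω ^ 2 ∂P) := Real.add_one_le_exp _

lemma exists_mul_sub_bennettCoeff_eq_hfun {L ϱ r : ℝ} (hL : 0 < L) (hϱ : 0 < ϱ) (hr : 0 < r) :
    ∃ θ > 0, θ * r - bennettCoeff θ L * ϱ = ϱ / L ^ 2 * hfun (L * r / ϱ) := by
  have hratio : 0 < L * r / ϱ := by positivity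
  refine ⟨Real.log (1 + L * r / ϱ) / L, div_pos (Real.log_pos (by linarith)) hL, ?_⟩
  rw [bennettCoeff, div_mul_cancel₀ _ hL.ne', Real.exp_log (by linarith), hfun]
  field_simp
  ring

end ScalarBennett

section MatrixBennett

open NormedSpace
open scoped Matrix.Norms.L2Operator

variable {n : Type*} [Fintype n]

/-- The summand `θx A - bennettCoeff θ L * v A²` of the exponent in the matrix Laplace transform
method for a random matrix `X A` with `X A ≤ L` and `E X² = v`, evaluated at `X = x`. The quadratic
term normalises its exponential to have expectation at most `1`. -/
noncomputable def bennettIncrement (A : Matrix n n ℂ) (θ L v x : ℝ) : Matrix n n ℂ :=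
  (θ * x) • A - (bennettCoeff θ L * v) • (A * A)

lemma continuous_bennettIncrement (A : Matrix n n ℂ) (θ L v : ℝ) :
    Continuous (bennettIncrement A θ L v) := by
  unfold bennettIncrement
  fun_prop

lemma isSelfAdjoint_bennettIncrement {A : Matrix n n ℂ} (hA : IsSelfAdjoint A) (θ L v x : ℝ) :
    IsSelfAdjoint (bennettIncrement A θ L v x) :=
  .sub (.smul (.all (θ * x)) hA) (.smul (.all (bennettCoeff θ L * v)) ((hA.commute_iff hA).1 rfl))

variable [DecidableEq n]

lemma continuous_matrix_exp : Continuous (exp : Matrix n n ℂ → Matrix n n ℂ) :=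
  let _ : NormedAlgebra ℚ (Matrix n n ℂ) := .restrictScalars ℚ ℝ _
  exp_continuous

lemma exp_smul_sub_smul_mul_self_eq_cfc {A : Matrix n n ℂ} (hA : IsSelfAdjoint A) (c d : ℝ) :
    exp (c • A - d • (A * A)) = cfc (fun z : ℝ => Real.exp (c * z - d * z ^ 2)) A := by
  have hquad : cfc (fun z : ℝ => c * z - d * z ^ 2) A = c • A - d • (A * A) := by
    rw [cfc_sub (fun z : ℝ => c * z) (fun z => d * z ^ 2) A, cfc_const_mul c (fun z => z) A,
      cfc_const_mul d (fun z => z ^ 2) A, cfc_pow (fun z : ℝ => z) 2 A, cfc_id' ℝ A, pow_two]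
  rw [← hquad, ← CFC.real_exp_eq_normedSpace_exp (cfc_predicate _ A), ← cfc_comp' Real.exp _ A]

lemma mul_le_of_smul_le_smul_one {A : Matrix n n ℂ} (hA : IsSelfAdjoint A) {c L z : ℝ}
    (hle : c • A ≤ L • (1 : Matrix n n ℂ)) (hz : z ∈ spectrum ℝ A) : c * z ≤ L := by
  rw [← Algebra.algebraMap_eq_smul_one, ← cfc_const_mul_id c A] at hle
  exact (cfc_le_algebraMap_iff (fun z : ℝ => c * z) L A).1 hle z hz

variable {Ω : Type*} [MeasurableSpace Ω] {P : Measure Ω}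

lemma integral_exp_smul_sub_smul_mul_self_eq_cfc [IsFiniteMeasure P] {A : Matrix n n ℂ}
    (hA : IsSelfAdjoint A) {X : Ω → ℝ} (hX : AEMeasurable X P) {θ L d : ℝ} (hθ : 0 ≤ θ) (hd : 0 ≤ d)
    (hXL : ∀ᵐ ω ∂P, X ω • A ≤ L • (1 : Matrix n n ℂ)) :
    ∫ ω, exp ((θ * X ω) • A - d • (A * A)) ∂P =
      cfc (fun z : ℝ => ∫ ω, Real.exp (θ * X ω * z - d * z ^ 2) ∂P) A := by
  have hbound : ∀ᵐ x ∂P.map X, ∀ z ∈ spectrum ℝ A,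
      ‖Real.exp (θ * x * z - d * z ^ 2)‖ ≤ Real.exp (θ * L) := by
    refine (ae_ball_iff A.finite_real_spectrum.countable).2 fun z hz =>
      (ae_map_iff hX (measurableSet_le (by fun_prop) measurable_const)).2 ?_
    filter_upwards [hXL] with ω hω
    rw [Real.norm_eq_abs, Real.abs_exp, Real.exp_le_exp, mul_assoc]
    have hXz := mul_le_mul_of_nonneg_left (mul_le_of_smul_le_smul_one hA hω hz) hθ
    linarith [mul_nonneg hd (sq_nonneg z)]
  have hmeas : AEStronglyMeasurable
      (fun x : ℝ => exp ((θ * x) • A - d • (A * A))) (P.map X) :=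
    (continuous_matrix_exp.comp (by fun_prop)).aestronglyMeasurable
  have : IsFiniteMeasure (P.map X) := P.isFiniteMeasure_map X
  have hfin : HasFiniteIntegral (fun _ : ℝ => Real.exp (θ * L)) (P.map X) :=
    (integrable_const _).hasFiniteIntegral
  have hmap (z : ℝ) : ∫ ω, Real.exp (θ * X ω * z - d * z ^ 2) ∂P =
      ∫ x, Real.exp (θ * x * z - d * z ^ 2) ∂P.map X :=
    (integral_map hX
      (f := fun x => Real.exp (θ * x * z - d * z ^ 2)) (by fun_prop)).symm
  simp_rw [← integral_map hX hmeas, hmap, exp_smul_sub_smul_mul_self_eq_cfc hA]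
  exact (cfc_integral _ (fun _ => Real.exp (θ * L)) A (by fun_prop) hbound hfin).symm

lemma integral_exp_bennettIncrement_le_one [IsProbabilityMeasure P] {A : Matrix n n ℂ}
    (hA : IsSelfAdjoint A) {X : Ω → ℝ} {θ L : ℝ} (hθ : 0 < θ) (hL : 0 < L) (hX : MemLp X 2 P)
    (hmean : ∫ ω, X ω ∂P = 0) (hXL : ∀ᵐ ω ∂P, X ω • A ≤ L • (1 : Matrix n n ℂ)) :
    ∫ ω, exp (bennettIncrement A θ L (∫ ω, X ω ^ 2 ∂P) (X ω)) ∂P ≤ 1 := by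
  simp only [bennettIncrement]
  rw [integral_exp_smul_sub_smul_mul_self_eq_cfc hA hX.aemeasurable hθ.le
    (mul_nonneg (bennettCoeff_nonneg θ L) (integral_nonneg fun ω => sq_nonneg _)) hXL]
  refine cfc_le_one _ A fun z hz => ?_
  have hmgf := integral_exp_mul_le_exp_bennettCoeff hθ hL (hX.mul_const z)
    (by rw [integral_mul_const, hmean, zero_mul])
    (hXL.mono fun ω hω => mul_le_of_smul_le_smul_one hA hω hz)
  simp_rw [mul_pow, integral_mul_const, ← mul_assoc] at hmgf
  simp_rw [Real.exp_sub, integral_div]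
  exact div_le_one_of_le₀ hmgf (Real.exp_pos _).le

end MatrixBennett

section IndependentSum

open NormedSpace
open scoped Matrix.Norms.L2Operator

variable {n : Type*} [Fintype n] [DecidableEq n] {Ω : Type*} [MeasurableSpace Ω] {P : Measure Ω}

lemma integrable_re_trace {Z : Ω → Matrix n n ℂ} (hZ : Integrable Z P) :
    Integrable (fun ω => (Z ω).trace.re) P :=
  (Complex.reCLM.comp (traceLinearMap n ℝ ℂ).toContinuousLinearMap).integrable_comp hZ

lemma integral_re_trace {Z : Ω → Matrix n n ℂ} (hZ : Integrable Z P) :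
    ∫ ω, (Z ω).trace.re ∂P = (∫ ω, Z ω ∂P).trace.re :=
  (Complex.reCLM.comp (traceLinearMap n ℝ ℂ).toContinuousLinearMap).integral_comp_comm hZ

variable [MeasurableSpace (Matrix n n ℂ)] [BorelSpace (Matrix n n ℂ)]

lemma integrable_exp_of_norm_le [IsFiniteMeasure P] {Z : Ω → Matrix n n ℂ} (hZ : Measurable Z)
    {R : ℝ} (hR : ∀ᵐ ω ∂P, ‖Z ω‖ ≤ R) : Integrable (fun ω => exp (Z ω)) P := by
  obtain ⟨C, hC⟩ := (isCompact_closedBall (0 : Matrix n n ℂ) R).exists_bound_of_continuousOn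
    continuous_matrix_exp.continuousOn
  exact .of_bound (continuous_matrix_exp.measurable.comp hZ).aestronglyMeasurable C
    (hR.mono fun ω hω => hC _ (mem_closedBall_zero_iff.2 hω))

lemma integral_re_trace_exp_add_le {S Z : Ω → Matrix n n ℂ} (hSZ : S ⟂ᵢ[P] Z)
    (hS : ∀ ω, (S ω).IsHermitian) (hZ : ∀ ω, (Z ω).IsHermitian)
    (hSZ_int : Integrable (fun ω => exp (S ω + Z ω)) P)
    (hS_int : Integrable (fun ω => exp (S ω)) P) (hZ_int : Integrable (fun ω => exp (Z ω)) P)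
    (hZ_one : ∫ ω, exp (Z ω) ∂P ≤ 1) :
    ∫ ω, (exp (S ω + Z ω)).trace.re ∂P ≤ ∫ ω, (exp (S ω)).trace.re ∂P := by
  have hindep : (fun ω => exp (S ω)) ⟂ᵢ[P] (fun ω => exp (Z ω)) :=
    hSZ.comp continuous_matrix_exp.measurable continuous_matrix_exp.measurable
  have hprod := hindep.integrable_bilin hS_int hZ_int (ContinuousLinearMap.mul ℝ (Matrix n n ℂ))
  have hfactor := hindep.integral_bilin hS_int hZ_int (ContinuousLinearMap.mul ℝ (Matrix n n ℂ))
  simp only [ContinuousLinearMap.mul_apply'] at hprod hfactor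
  have hexp_nonneg : 0 ≤ ∫ ω, exp (S ω) ∂P :=
    integral_nonneg fun ω => IsSelfAdjoint.exp_nonneg (hS ω)
  calc ∫ ω, (exp (S ω + Z ω)).trace.re ∂P
      ≤ ∫ ω, (exp (S ω) * exp (Z ω)).trace.re ∂P :=
        integral_mono (integrable_re_trace hSZ_int) (integrable_re_trace hprod)
          fun ω => golden_thompson (hS ω) (hZ ω)
    _ = ((∫ ω, exp (S ω) ∂P) * ∫ ω, exp (Z ω) ∂P).trace.re := by
        rw [integral_re_trace hprod, hfactor]
    _ ≤ ((∫ ω, exp (S ω) ∂P) * 1).trace.re :=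
        re_trace_mul_le_re_trace_mul hexp_nonneg hZ_one
    _ = ∫ ω, (exp (S ω)).trace.re ∂P := by rw [mul_one, integral_re_trace hS_int]

variable {ι : Type*} {Z : ι → Ω → Matrix n n ℂ} {R : ι → ℝ}

lemma integrable_exp_sum_of_norm_le [IsFiniteMeasure P] (hmeas : ∀ k, Measurable (Z k))
    (hbdd : ∀ k, ∀ᵐ ω ∂P, ‖Z k ω‖ ≤ R k) (t : Finset ι) :
    Integrable (fun ω => exp (∑ k ∈ t, Z k ω)) P :=
  integrable_exp_of_norm_le (Finset.measurable_sum t fun k _ => hmeas k)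
    (((Filter.eventually_all_finset t).2 fun k _ => hbdd k).mono
      fun _ hω => norm_sum_le_of_le t hω)

lemma integral_re_trace_exp_sum_le_card [IsProbabilityMeasure P] (hindep : iIndepFun Z P)
    (hmeas : ∀ k, Measurable (Z k)) (hherm : ∀ k ω, (Z k ω).IsHermitian)
    (hbdd : ∀ k, ∀ᵐ ω ∂P, ‖Z k ω‖ ≤ R k) (hone : ∀ k, ∫ ω, exp (Z k ω) ∂P ≤ 1) (t : Finset ι) :
    ∫ ω, (exp (∑ k ∈ t, Z k ω)).trace.re ∂P ≤ Fintype.card n := by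
  classical
  have hint := integrable_exp_sum_of_norm_le hmeas hbdd
  induction t using Finset.induction_on with
  | empty => simp
  | insert k u hk ih =>
    have hsum (ω : Ω) : ∑ j ∈ insert k u, Z j ω = ∑ j ∈ u, Z j ω + Z k ω := by
      rw [Finset.sum_insert hk, add_comm]
    have hu : (fun ω => ∑ j ∈ u, Z j ω) ⟂ᵢ[P] Z k := by
      simpa only [← Finset.sum_apply] using hindep.indepFun_finsetSum_of_notMem hmeas hk
    simp only [hsum]
    exact (integral_re_trace_exp_add_le hu
      (fun ω => isSelfAdjoint_sum u fun j _ => hherm j ω) (hherm k)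
      (by simpa only [hsum] using hint (insert k u)) (hint u)
      (integrable_exp_of_norm_le (hmeas k) (hbdd k)) (hone k)).trans ih

end IndependentSum

section MatrixBennettTail

open NormedSpace
open scoped Matrix.Norms.L2Operator

variable {n : Type*} [Fintype n] [DecidableEq n] {Ω : Type*} [MeasurableSpace Ω] {P : Measure Ω}
variable {ι : Type*} [Fintype ι] {A : ι → Matrix n n ℂ}

lemma posDef_smul_one_sub_sum_of_re_trace_exp_lt (hA : ∀ k, IsSelfAdjoint (A k)) {v x : ι → ℝ}
    {θ L ϱ r : ℝ} (hθ : 0 < θ) (hvar : ∑ k, v k • (A k * A k) ≤ ϱ • (1 : Matrix n n ℂ))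
    (hexp : (exp (∑ k, bennettIncrement (A k) θ L (v k) (x k))).trace.re <
      Real.exp (θ * r - bennettCoeff θ L * ϱ)) :
    (r • (1 : Matrix n n ℂ) - ∑ k, x k • A k).PosDef := by
  have hlt := posDef_smul_one_sub_of_re_trace_exp_lt
    (isSelfAdjoint_sum _ fun k _ => isSelfAdjoint_bennettIncrement (hA k) θ L (v k) (x k)) hexp
  have hslack := (nonneg_iff_posSemidef.1 (sub_nonneg.2 hvar)).smul (bennettCoeff_nonneg θ L)
  convert (hlt.add_posSemidef hslack).smul (inv_pos.2 hθ) using 1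
  simp only [bennettIncrement, Finset.sum_sub_distrib, mul_smul, ← Finset.smul_sum, smul_sub,
    smul_add, sub_smul, inv_smul_smul₀ hθ.ne']
  abel

lemma exp_mul_measureReal_le_integral_re_trace_exp {H : Ω → Matrix n n ℂ}
    (hH : ∀ ω, IsSelfAdjoint (H ω)) (hint : Integrable (fun ω => exp (H ω)) P) (a : ℝ) :
    Real.exp a * P.real {ω | Real.exp a ≤ (exp (H ω)).trace.re} ≤
      ∫ ω, (exp (H ω)).trace.re ∂P := by
  refine mul_meas_ge_le_integral_of_nonneg (ae_of_all _ fun ω => ?_) (integrable_re_trace hint) _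
  simpa only [mul_one, Pi.zero_apply] using
    re_trace_mul_nonneg (IsSelfAdjoint.exp_nonneg (hH ω)) zero_le_one

theorem measureReal_not_posDef_smul_one_sub_sum_le [IsProbabilityMeasure P] {ξ : ι → Ω → ℝ}
    {R L ϱ r : ℝ} (hA : ∀ k, IsSelfAdjoint (A k)) (hindep : iIndepFun ξ P)
    (hmeas : ∀ k, Measurable (ξ k)) (hbdd : ∀ k, ∀ᵐ ω ∂P, ‖ξ k ω‖ ≤ R)
    (hmean : ∀ k, ∫ ω, ξ k ω ∂P = 0)
    (hle : ∀ k, ∀ᵐ ω ∂P, ξ k ω • A k ≤ L • (1 : Matrix n n ℂ))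
    (hvar : ∑ k, (∫ ω, ξ k ω ^ 2 ∂P) • (A k * A k) ≤ ϱ • (1 : Matrix n n ℂ))
    (hL : 0 < L) (hϱ : 0 < ϱ) (hr : 0 < r) :
    P.real {ω | ¬ (r • (1 : Matrix n n ℂ) - ∑ k, ξ k ω • A k).PosDef} ≤
      Fintype.card n * Real.exp (-(ϱ / L ^ 2) * hfun (L * r / ϱ)) := by
  obtain ⟨θ, hθ, hθr⟩ := exists_mul_sub_bennettCoeff_eq_hfun hL hϱ hr
  borelize (Matrix n n ℂ)
  set Y : ι → ℝ → Matrix n n ℂ := fun k => bennettIncrement (A k) θ L (∫ ω, ξ k ω ^ 2 ∂P)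
  have hYcont (k : ι) : Continuous (Y k) := continuous_bennettIncrement _ _ _ _
  have hYmeas (k : ι) : Measurable fun ω => Y k (ξ k ω) := (hYcont k).measurable.comp (hmeas k)
  have hYherm (k : ι) (ω : Ω) : IsSelfAdjoint (Y k (ξ k ω)) :=
    isSelfAdjoint_bennettIncrement (hA k) _ _ _ _
  have hYbdd (k : ι) : ∃ C, ∀ᵐ ω ∂P, ‖Y k (ξ k ω)‖ ≤ C :=
    ((isCompact_closedBall (0 : ℝ) R).exists_bound_of_continuousOn (hYcont k).continuousOn).imp
      fun C hC => (hbdd k).mono fun ω hω => hC _ (mem_closedBall_zero_iff.2 hω)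
  choose C hC using hYbdd
  have hYone (k : ι) : ∫ ω, exp (Y k (ξ k ω)) ∂P ≤ 1 :=
    integral_exp_bennettIncrement_le_one (hA k) hθ hL
      (.of_bound (hmeas k).aestronglyMeasurable R (hbdd k)) (hmean k) (hle k)
  have htrace := integral_re_trace_exp_sum_le_card
    (hindep.comp Y fun k => (hYcont k).measurable) hYmeas hYherm hC hYone univ
  have hmarkov := exp_mul_measureReal_le_integral_re_trace_exp
    (fun ω => isSelfAdjoint_sum univ fun k _ => hYherm k ω)
    (integrable_exp_sum_of_norm_le hYmeas hC univ) (θ * r - bennettCoeff θ L * ϱ)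
  rw [neg_mul, Real.exp_neg, ← hθr, ← div_eq_mul_inv, le_div_iff₀ (Real.exp_pos _), mul_comm]
  refine le_trans ?_ (hmarkov.trans htrace)
  refine mul_le_mul_of_nonneg_left (measureReal_mono fun ω hω => ?_) (Real.exp_pos _).le
  exact not_lt.1 fun hlt => hω (posDef_smul_one_sub_sum_of_re_trace_exp_lt hA hθ hvar hlt)

end MatrixBennettTail

section BlockGram

variable {ι κ n : Type*} [Fintype ι] [DecidableEq κ]

/-- The contribution `∑ u u†` of the rows of `U` with block label `k` to the Gram matrix `U† U`;
`b` assigns its block to each row. -/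
def blockGram (U : Matrix ι n ℂ) (b : ι → κ) (k : κ) : Matrix n n ℂ :=
  ∑ i with b i = k, vecMulVec (star (U i)) (U i)

variable (U : Matrix ι n ℂ) (b : ι → κ)

lemma conjTranspose_mul_diagonal_mul [DecidableEq ι] (d : ι → ℂ) :
    Uᴴ * diagonal d * U = ∑ i, d i • vecMulVec (star (U i)) (U i) := by
  ext j l
  rw [mul_apply, Matrix.sum_apply]
  simp only [mul_diagonal, Matrix.smul_apply, vecMulVec_apply, conjTranspose_apply, Pi.star_apply,
    smul_eq_mul]
  exact Finset.sum_congr rfl fun i _ => by ring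

lemma conjTranspose_mul_diagonal_comp_mul [DecidableEq ι] [Fintype κ] (c : κ → ℝ) :
    Uᴴ * diagonal (fun i => (c (b i) : ℂ)) * U = ∑ k, c k • blockGram U b k := by
  simp only [conjTranspose_mul_diagonal_mul, blockGram, Finset.smul_sum, Complex.coe_smul]
  rw [← Finset.sum_fiberwise univ b]
  exact Finset.sum_congr rfl fun k _ => Finset.sum_congr rfl fun i hi => by
    rw [(Finset.mem_filter.1 hi).2]

variable {U b}

lemma sum_blockGram [Fintype κ] [DecidableEq n] (hU : Uᴴ * U = 1) : ∑ k, blockGram U b k = 1 := by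
  classical
  simpa [hU] using (conjTranspose_mul_diagonal_comp_mul U b 1).symm

lemma blockGram_nonneg [Finite n] (k : κ) : 0 ≤ blockGram U b k :=
  Finset.sum_nonneg fun i _ => (posSemidef_vecMulVec_star_self (U i)).nonneg

lemma blockGram_le_one [Finite κ] [Finite n] [DecidableEq n] (hU : Uᴴ * U = 1) (k : κ) :
    blockGram U b k ≤ 1 := by
  cases nonempty_fintype κ
  exact (Finset.single_le_sum (fun k _ => blockGram_nonneg k) (Finset.mem_univ k)).trans_eq
    (sum_blockGram hU)

variable [Fintype n]

lemma re_trace_blockGram (k : κ) :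
    (blockGram U b k).trace.re = ∑ i with b i = k, ∑ j, ‖U i j‖ ^ 2 := by
  simp only [blockGram, trace_sum, trace_vecMulVec, dotProduct, Pi.star_apply, Complex.re_sum,
    Complex.star_def, Complex.conj_mul', ← Complex.ofReal_pow, Complex.ofReal_re]

lemma blockGram_le_min_smul_one [Finite κ] [DecidableEq n] (hU : Uᴴ * U = 1) {k : κ} {m : ℝ}
    (hm : (blockGram U b k).trace.re ≤ m) : blockGram U b k ≤ min m 1 • 1 := by
  rcases min_choice m 1 with h | h
  · rw [h]
    exact (le_re_trace_smul_one (blockGram_nonneg k)).trans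
      (smul_le_smul_of_nonneg_right hm zero_le_one)
  · rw [h, one_smul]
    exact blockGram_le_one hU k

end BlockGram

section ScaledBlockGram

variable {ι κ n : Type*} [Fintype ι] [DecidableEq κ] [Fintype n]

/-- The block Gram matrix rescaled to have trace `Q`, the number of rows in the block. -/
noncomputable def scaledBlockGram (U : Matrix ι n ℂ) (b : ι → κ) (Q : ℕ) (k : κ) : Matrix n n ℂ :=
  (Q / (blockGram U b k).trace.re) • blockGram U b k

variable {U : Matrix ι n ℂ} {b : ι → κ} {Q : ℕ} {ηL ηU : ℝ}

lemma mul_le_re_trace_blockGram (hb : ∀ k, #{i | b i = k} = Q)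
    (hηL : ∀ i, ηL ≤ ∑ j, ‖U i j‖ ^ 2) (k : κ) : Q * ηL ≤ (blockGram U b k).trace.re := by
  rw [re_trace_blockGram, ← hb k, ← nsmul_eq_mul]
  exact Finset.card_nsmul_le_sum _ _ _ fun i _ => hηL i

lemma re_trace_blockGram_le_mul (hb : ∀ k, #{i | b i = k} = Q)
    (hηU : ∀ i, ∑ j, ‖U i j‖ ^ 2 ≤ ηU) (k : κ) : (blockGram U b k).trace.re ≤ Q * ηU := by
  rw [re_trace_blockGram, ← hb k, ← nsmul_eq_mul]
  exact Finset.sum_le_card_nsmul _ _ _ fun i _ => hηU i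

lemma scaledBlockGram_nonneg (k : κ) : 0 ≤ scaledBlockGram U b Q k := by
  refine smul_nonneg (div_nonneg Q.cast_nonneg ?_) (blockGram_nonneg k)
  rw [re_trace_blockGram]
  positivity

lemma scaledBlockGram_le_smul (hb : ∀ k, #{i | b i = k} = Q) (hQ : 0 < Q) (hηL₀ : 0 < ηL)
    (hηL : ∀ i, ηL ≤ ∑ j, ‖U i j‖ ^ 2) (k : κ) :
    scaledBlockGram U b Q k ≤ (1 / ηL) • blockGram U b k := by
  have htr := mul_le_re_trace_blockGram hb hηL k
  have hQηL : 0 < Q * ηL := by positivity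
  refine smul_le_smul_of_nonneg_right ?_ (blockGram_nonneg k)
  rwa [div_le_div_iff₀ (hQηL.trans_le htr) hηL₀, one_mul]

lemma smul_le_scaledBlockGram (hb : ∀ k, #{i | b i = k} = Q)
    (hηU₀ : 0 < ηU) (hηU : ∀ i, ∑ j, ‖U i j‖ ^ 2 ≤ ηU) (k : κ)
    (htr₀ : 0 < (blockGram U b k).trace.re) :
    (1 / ηU) • blockGram U b k ≤ scaledBlockGram U b Q k := by
  refine smul_le_smul_of_nonneg_right ?_ (blockGram_nonneg k)
  rw [div_le_div_iff₀ hηU₀ htr₀, one_mul]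
  exact re_trace_blockGram_le_mul hb hηU k

variable [DecidableEq n]

lemma scaledBlockGram_le_smul_one [Finite κ] (hU : Uᴴ * U = 1)
    (hb : ∀ k, #{i | b i = k} = Q) (hQ : 0 < Q) (hηL₀ : 0 < ηL)
    (hηL : ∀ i, ηL ≤ ∑ j, ‖U i j‖ ^ 2) (hηU : ∀ i, ∑ j, ‖U i j‖ ^ 2 ≤ ηU) (k : κ) :
    scaledBlockGram U b Q k ≤ (1 / ηL * min (Q * ηU) 1) • (1 : Matrix n n ℂ) := by
  rw [mul_smul]
  exact (scaledBlockGram_le_smul hb hQ hηL₀ hηL k).trans (smul_le_smul_of_nonneg_left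
    (blockGram_le_min_smul_one hU (re_trace_blockGram_le_mul hb hηU k)) (by positivity))

variable [Fintype κ]

lemma smul_one_le_sum_scaledBlockGram (hU : Uᴴ * U = 1) (hb : ∀ k, #{i | b i = k} = Q)
    (hηU₀ : 0 < ηU) (hηU : ∀ i, ∑ j, ‖U i j‖ ^ 2 ≤ ηU)
    (htr₀ : ∀ k, 0 < (blockGram U b k).trace.re) :
    (1 / ηU) • (1 : Matrix n n ℂ) ≤ ∑ k, scaledBlockGram U b Q k := by
  rw [← sum_blockGram (b := b) hU, Finset.smul_sum]
  exact Finset.sum_le_sum fun k _ => smul_le_scaledBlockGram hb hηU₀ hηU k (htr₀ k)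

lemma sum_scaledBlockGram_mul_self_le (hU : Uᴴ * U = 1) (hb : ∀ k, #{i | b i = k} = Q)
    (hQ : 0 < Q) (hηL₀ : 0 < ηL) (hηL : ∀ i, ηL ≤ ∑ j, ‖U i j‖ ^ 2) (hηU₀ : 0 < ηU)
    (hηU : ∀ i, ∑ j, ‖U i j‖ ^ 2 ≤ ηU) :
    ∑ k, scaledBlockGram U b Q k * scaledBlockGram U b Q k ≤
      (1 / ηL ^ 2 * min (Q * ηU) 1) • (1 : Matrix n n ℂ) :=
  calc ∑ k, scaledBlockGram U b Q k * scaledBlockGram U b Q k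
      ≤ ∑ k, (1 / ηL * min (Q * ηU) 1) • (1 / ηL) • blockGram U b k :=
        Finset.sum_le_sum fun k _ => (mul_self_le_smul_of_nonneg_of_le_smul_one
          (scaledBlockGram_nonneg k) (scaledBlockGram_le_smul_one hU hb hQ hηL₀ hηL hηU k)).trans
            (smul_le_smul_of_nonneg_left (scaledBlockGram_le_smul hb hQ hηL₀ hηL k) (by positivity))
    _ = (1 / ηL ^ 2 * min (Q * ηU) 1) • (1 : Matrix n n ℂ) := by
        rw [← Finset.smul_sum, ← Finset.smul_sum, sum_blockGram hU, smul_smul]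
        ring_nf

end ScaledBlockGram

section ThresholdDeficit

/-- The deviation `1 - 1{τ ≤ w} / p` of a normalised exceedance indicator from its mean; it is
centred when `w` is sampled from a law with `P(τ ≤ w) = p`. -/
noncomputable def exceedanceDeficit (p τ w : ℝ) : ℝ := 1 - (Set.Ici τ).indicator (fun _ => 1 / p) w

variable {p τ : ℝ}

lemma measurable_exceedanceDeficit (p τ : ℝ) : Measurable (exceedanceDeficit p τ) :=
  measurable_const.sub (measurable_const.indicator measurableSet_Ici)

lemma exceedanceDeficit_le_one (hp : 0 < p) (w : ℝ) : exceedanceDeficit p τ w ≤ 1 :=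
  sub_le_self 1 (Set.indicator_nonneg (fun _ _ => by positivity) w)

lemma norm_exceedanceDeficit_le (p τ w : ℝ) : ‖exceedanceDeficit p τ w‖ ≤ 1 + ‖1 / p‖ :=
  (norm_sub_le _ _).trans (by gcongr; exacts [norm_one.le, norm_indicator_le_norm_self _ _])

lemma mul_one_sub_exceedanceDeficit_le (hp : 0 < p) {w : ℝ} (hw : 0 ≤ w) :
    τ * p * (1 - exceedanceDeficit p τ w) ≤ w := by
  rw [exceedanceDeficit, sub_sub_cancel]
  by_cases h : τ ≤ w
  · rw [Set.indicator_of_mem (Set.mem_Ici.2 h), mul_assoc, mul_one_div_cancel hp.ne', mul_one]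
    exact h
  · rw [Set.indicator_of_notMem (by simpa using h), mul_zero]
    exact hw

variable {Ω : Type*} [MeasurableSpace Ω] {P : Measure Ω} {X : Ω → ℝ}

lemma integral_indicator_Ici_comp (hX : Measurable X) (c τ : ℝ) :
    ∫ ω, (Set.Ici τ).indicator (fun _ => c) (X ω) ∂P = P.real {ω | τ ≤ X ω} * c :=
  integral_indicator_const c (hX measurableSet_Ici)

variable [IsProbabilityMeasure P]

lemma integral_exceedanceDeficit (hX : Measurable X) (hp : 0 < p)
    (hXp : P.real {ω | τ ≤ X ω} = p) : ∫ ω, exceedanceDeficit p τ (X ω) ∂P = 0 := by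
  simp only [exceedanceDeficit]
  rw [integral_sub (integrable_const 1) ((integrable_const _).indicator (hX measurableSet_Ici)),
    integral_indicator_Ici_comp hX, hXp, mul_one_div_cancel hp.ne']
  simp

lemma integral_exceedanceDeficit_sq (hX : Measurable X) (hp : 0 < p)
    (hXp : P.real {ω | τ ≤ X ω} = p) :
    ∫ ω, exceedanceDeficit p τ (X ω) ^ 2 ∂P = 1 / p - 1 := by
  have hsq (w : ℝ) : exceedanceDeficit p τ w ^ 2 =
      1 - (Set.Ici τ).indicator (fun _ => 2 / p - 1 / p ^ 2) w := by
    unfold exceedanceDeficit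
    by_cases h : w ∈ Set.Ici τ
    · simp only [Set.indicator_of_mem h]; ring
    · simp only [Set.indicator_of_notMem h]; ring
  simp only [hsq]
  rw [integral_sub (integrable_const 1) ((integrable_const _).indicator (hX measurableSet_Ici)),
    integral_indicator_Ici_comp hX, hXp]
  simp only [integral_const, probReal_univ, one_smul]
  field_simp
  ring

end ThresholdDeficit

section EstimationError

variable {ι κ n : Type*} [DecidableEq n]

lemma posDef_sum_smul_sub_smul_one [Fintype κ] [Finite n] {A : κ → Matrix n n ℂ}
    (hA : ∀ k, 0 ≤ A k) {w x : κ → ℝ} {a δ r : ℝ} (ha : 0 < a) (hw : ∀ k, a * (1 - x k) ≤ w k)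
    (hδ : δ • (1 : Matrix n n ℂ) ≤ ∑ k, A k)
    (hr : (r • (1 : Matrix n n ℂ) - ∑ k, x k • A k).PosDef) :
    (∑ k, w k • A k - (a * (δ - r)) • (1 : Matrix n n ℂ)).PosDef := by
  cases nonempty_fintype n
  have hw_le : ∑ k, (a * (1 - x k)) • A k ≤ ∑ k, w k • A k :=
    Finset.sum_le_sum fun k _ => smul_le_smul_of_nonneg_right (hw k) (hA k)
  have hw_slack := nonneg_iff_posSemidef.1 (sub_nonneg.2 hw_le)
  have hδ_slack := (nonneg_iff_posSemidef.1 (sub_nonneg.2 hδ)).smul ha.le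
  convert ((hr.smul ha).add_posSemidef hδ_slack).add_posSemidef hw_slack using 1
  simp only [mul_smul, ← Finset.smul_sum, sub_smul, one_smul, Finset.sum_sub_distrib, smul_sub]
  abel

variable [Fintype ι] [DecidableEq ι] [Fintype n]

/-- The linear minimum mean-square error `tr (α + U† diag(g) U / σ)⁻¹` of estimating a signal with
covariance `U U† / α` from observations with gains `g` and noise variance `σ`. -/
noncomputable def linearMMSE (U : Matrix ι n ℂ) (α σ : ℝ) (g : ι → ℝ) : ℝ :=
  (((α : ℂ) • (1 : Matrix n n ℂ) +
    (σ : ℂ)⁻¹ • (Uᴴ * diagonal (fun i => (g i : ℂ)) * U))⁻¹).trace.re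

variable [Fintype κ] [DecidableEq κ] {U : Matrix ι n ℂ} {b : ι → κ} {Q : ℕ}

lemma linearMMSE_block_eq (hQ : 0 < Q) {α : ℝ} (σ : ℝ) (w : κ → ℝ) :
    linearMMSE U α σ (fun i => w (b i) / (α⁻¹ * (blockGram U b (b i)).trace.re)) =
      ((α • ((1 : Matrix n n ℂ) + (1 / σ * (1 / Q)) •
        ∑ k, w k • scaledBlockGram U b Q k))⁻¹).trace.re := by
  have hgain := conjTranspose_mul_diagonal_comp_mul U b
    fun k => w k / (α⁻¹ * (blockGram U b k).trace.re)
  rw [linearMMSE, hgain, ← Complex.ofReal_inv, Complex.coe_smul, Complex.coe_smul]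
  simp only [smul_add, Finset.smul_sum, scaledBlockGram, smul_smul]
  congr! 6 with k
  field_simp

end EstimationError

section BlockTransmission

variable {ι κ n : Type*} [Fintype ι] [DecidableEq n] {U : Matrix ι n ℂ}

lemma nonempty_of_conjTranspose_mul_self_eq_one [Nonempty n] (hU : Uᴴ * U = 1) : Nonempty ι := by
  obtain ⟨j⟩ := ‹Nonempty n›
  by_contra hι
  have := not_nonempty_iff.1 hι
  simpa [mul_apply] using congrFun₂ hU j j

variable [DecidableEq κ] [Fintype n] {b : ι → κ} {Q : ℕ} {ηL ηU : ℝ}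

lemma exceedanceDeficit_smul_scaledBlockGram_le [Finite κ] (hU : Uᴴ * U = 1)
    (hb : ∀ k, #{i | b i = k} = Q) (hQ : 0 < Q) (hηL₀ : 0 < ηL)
    (hηL : ∀ i, ηL ≤ ∑ j, ‖U i j‖ ^ 2) (hηU₀ : 0 < ηU)
    (hηU : ∀ i, ∑ j, ‖U i j‖ ^ 2 ≤ ηU) {p : ℝ} (hp : 0 < p) (τ w : ℝ) (k : κ) :
    exceedanceDeficit p τ w • scaledBlockGram U b Q k ≤
      (1 / ηL * max (1 / p - 1) 1 * min (Q * ηU) 1) • (1 : Matrix n n ℂ) :=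
  calc exceedanceDeficit p τ w • scaledBlockGram U b Q k
      ≤ (1 : ℝ) • scaledBlockGram U b Q k :=
        smul_le_smul_of_nonneg_right (exceedanceDeficit_le_one hp w) (scaledBlockGram_nonneg k)
    _ ≤ (1 / ηL * min (Q * ηU) 1) • (1 : Matrix n n ℂ) := by
        rw [one_smul]
        exact scaledBlockGram_le_smul_one hU hb hQ hηL₀ hηL hηU k
    _ ≤ (1 / ηL * max (1 / p - 1) 1 * min (Q * ηU) 1) • (1 : Matrix n n ℂ) := by
        refine smul_le_smul_of_nonneg_right ?_ zero_le_one
        gcongr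
        exact le_mul_of_one_le_right (by positivity) (le_max_right _ _)

variable {Ω : Type*} [MeasurableSpace Ω] {P : Measure Ω} [IsProbabilityMeasure P]

lemma sum_integral_sq_smul_scaledBlockGram_le [Fintype κ] (hU : Uᴴ * U = 1)
    (hb : ∀ k, #{i | b i = k} = Q) (hQ : 0 < Q) (hηL₀ : 0 < ηL)
    (hηL : ∀ i, ηL ≤ ∑ j, ‖U i j‖ ^ 2) (hηU₀ : 0 < ηU)
    (hηU : ∀ i, ∑ j, ‖U i j‖ ^ 2 ≤ ηU) {W : κ → Ω → ℝ} (hW : ∀ k, Measurable (W k))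
    {p τ : ℝ} (hp₀ : 0 < p) (hp₁ : p ≤ 1) (hWp : ∀ k, P.real {ω | τ ≤ W k ω} = p) :
    ∑ k, (∫ ω, exceedanceDeficit p τ (W k ω) ^ 2 ∂P) •
        (scaledBlockGram U b Q k * scaledBlockGram U b Q k) ≤
      (1 / ηL ^ 2 * (1 / p - 1) * min (Q * ηU) 1) • (1 : Matrix n n ℂ) := by
  have hvar : 0 ≤ 1 / p - 1 := sub_nonneg.2 ((one_le_div hp₀).2 hp₁)
  have hgram := smul_le_smul_of_nonneg_left
    (sum_scaledBlockGram_mul_self_le hU hb hQ hηL₀ hηL hηU₀ hηU) hvar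
  simp only [fun k => integral_exceedanceDeficit_sq (hW k) hp₀ (hWp k), ← Finset.smul_sum]
  refine hgram.trans_eq ?_
  rw [smul_smul]
  ring_nf

lemma measureReal_exceedance_not_posDef_le [Fintype κ] (hU : Uᴴ * U = 1)
    (hb : ∀ k, #{i | b i = k} = Q) (hQ : 0 < Q) (hηL₀ : 0 < ηL)
    (hηL : ∀ i, ηL ≤ ∑ j, ‖U i j‖ ^ 2) (hηU₀ : 0 < ηU)
    (hηU : ∀ i, ∑ j, ‖U i j‖ ^ 2 ≤ ηU) {W : κ → Ω → ℝ} (hW : ∀ k, Measurable (W k))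
    (hindep : iIndepFun W P) {p τ r : ℝ} (hp₀ : 0 < p) (hp₁ : p < 1)
    (hWp : ∀ k, P.real {ω | τ ≤ W k ω} = p) (hr : 0 < r) :
    P.real {ω | ¬ (r • (1 : Matrix n n ℂ) -
        ∑ k, exceedanceDeficit p τ (W k ω) • scaledBlockGram U b Q k).PosDef} ≤
      fbt (Fintype.card n) (1 / ηL * max (1 / p - 1) 1 * min (Q * ηU) 1)
        (1 / ηL ^ 2 * (1 / p - 1) * min (Q * ηU) 1) r := by
  have hvar : 0 < 1 / p - 1 := sub_pos.2 ((one_lt_div hp₀).2 hp₁)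
  have hA (k : κ) : IsSelfAdjoint (scaledBlockGram U b Q k) := .of_nonneg (scaledBlockGram_nonneg k)
  have hmeas (k : κ) : Measurable fun ω => exceedanceDeficit p τ (W k ω) :=
    (measurable_exceedanceDeficit p τ).comp (hW k)
  have hξindep : iIndepFun (fun k ω => exceedanceDeficit p τ (W k ω)) P :=
    hindep.comp _ fun _ => measurable_exceedanceDeficit p τ
  have hbennett := measureReal_not_posDef_smul_one_sub_sum_le hA hξindep hmeas
    (fun k => ae_of_all _ fun ω => norm_exceedanceDeficit_le p τ (W k ω))
    (fun k => integral_exceedanceDeficit (hW k) hp₀ (hWp k))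
    (fun k => ae_of_all _ fun ω =>
      exceedanceDeficit_smul_scaledBlockGram_le hU hb hQ hηL₀ hηL hηU₀ hηU hp₀ τ (W k ω) k)
    (sum_integral_sq_smul_scaledBlockGram_le hU hb hQ hηL₀ hηL hηU₀ hηU hW hp₀ hp₁.le hWp)
    (by positivity) (by positivity) hr
  refine hbennett.trans ?_
  rw [fbt]
  gcongr
  exact le_mul_of_one_le_left (Nat.cast_nonneg _) one_le_two

lemma ofReal_one_sub_le_measure_of_measureReal_not_le {p q : Ω → Prop} {δ : ℝ}
    (hp : P.real {ω | ¬ p ω} ≤ δ) (hpq : ∀ᵐ ω ∂P, p ω → q ω) :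
    ENNReal.ofReal (1 - δ) ≤ P {ω | q ω} := by
  have hcover : 1 ≤ P.real {ω | p ω} + P.real {ω | p ω}ᶜ := by
    simpa using measureReal_union_le (μ := P) {ω | p ω} {ω | p ω}ᶜ
  have hp_le : 1 - δ ≤ P.real {ω | p ω} := by
    rw [Set.compl_ofPred] at hcover
    linarith
  calc ENNReal.ofReal (1 - δ) ≤ P {ω | p ω} := ENNReal.ofReal_le_of_le_toReal hp_le
    _ ≤ P {ω | q ω} := measure_mono_ae hpq

lemma one_le_fbt_zero {m : ℕ} (hm : 0 < m) (μ r : ℝ) : 1 ≤ fbt m μ 0 r := by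
  have : (1 : ℝ) ≤ m := by exact_mod_cast hm
  simp only [fbt, zero_div, neg_zero, zero_mul, Real.exp_zero, mul_one]
  linarith

variable [DecidableEq ι]

lemma linearMMSE_block_lt [Fintype κ] [Nonempty n] (hQ : 0 < Q) {α σ : ℝ} (hα : 0 < α)
    (hσ : 0 < σ) {w x : κ → ℝ} {a δ r : ℝ} (ha : 0 < a)
    (hw : ∀ k, a * (1 - x k) ≤ w k) (hrδ : r ≤ δ)
    (hδ : δ • (1 : Matrix n n ℂ) ≤ ∑ k, scaledBlockGram U b Q k)
    (hr : (r • (1 : Matrix n n ℂ) - ∑ k, x k • scaledBlockGram U b Q k).PosDef) :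
    linearMMSE U α σ (fun i => w (b i) / (α⁻¹ * (blockGram U b (b i)).trace.re)) <
      Fintype.card n / (α * (1 + 1 / σ * (1 / Q) * (a * (δ - r)))) := by
  have : 0 ≤ δ - r := sub_nonneg.2 hrδ
  rw [linearMMSE_block_eq hQ]
  refine re_trace_inv_lt_of_posDef_sub_smul_one (by positivity) ?_
  have hpos := posDef_sum_smul_sub_smul_one (fun k => scaledBlockGram_nonneg k) ha hw hδ hr
  convert (hpos.smul (show 0 < 1 / σ * (1 / (Q : ℝ)) by positivity)).smul hα using 1
  simp only [mul_smul α, ← smul_sub, add_smul, one_smul, mul_smul (1 / σ * (1 / (Q : ℝ))),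
    add_sub_add_left_eq_sub]

lemma ofReal_one_sub_fbt_le_measure_linearMMSE_block_lt [Finite κ] [Nonempty n]
    (hU : Uᴴ * U = 1) (hb : ∀ k, #{i | b i = k} = Q) (hQ : 0 < Q) (hηL₀ : 0 < ηL)
    (hηL : ∀ i, ηL ≤ ∑ j, ‖U i j‖ ^ 2) (hηU : ∀ i, ∑ j, ‖U i j‖ ^ 2 ≤ ηU)
    {α σ : ℝ} (hα : 0 < α) (hσ : 0 < σ) {W : κ → Ω → ℝ} (hW : ∀ k, Measurable (W k))
    (hindep : iIndepFun W P) (hW₀ : ∀ k, ∀ᵐ ω ∂P, 0 ≤ W k ω) {p τ r : ℝ} (hτ : 0 < τ)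
    (hp₀ : 0 < p) (hp₁ : p < 1) (hWp : ∀ k, P.real {ω | τ ≤ W k ω} = p) (hr₀ : 0 < r)
    (hr₁ : r ≤ 1 / ηU) :
    ENNReal.ofReal (1 - fbt (Fintype.card n) (1 / ηL * max (1 / p - 1) 1 * min (Q * ηU) 1)
        (1 / ηL ^ 2 * (1 / p - 1) * min (Q * ηU) 1) r) ≤
      P {ω | linearMMSE U α σ (fun i => W (b i) ω / (α⁻¹ * (blockGram U b (b i)).trace.re)) <
        Fintype.card n / (α * (1 + 1 / σ * (1 / Q) * (τ * p * (1 / ηU - r))))} := by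
  cases nonempty_fintype κ
  have hηU₀ : 0 < ηU := one_div_pos.1 (hr₀.trans_le hr₁)
  have htr (k : κ) : 0 < (blockGram U b k).trace.re :=
    (show 0 < Q * ηL by positivity).trans_le (mul_le_re_trace_blockGram hb hηL k)
  have hδ := smul_one_le_sum_scaledBlockGram hU hb hηU₀ hηU htr
  have htail := measureReal_exceedance_not_posDef_le hU hb hQ hηL₀ hηL hηU₀ hηU hW hindep hp₀ hp₁
    hWp hr₀
  refine ofReal_one_sub_le_measure_of_measureReal_not_le htail ?_
  filter_upwards [ae_all_iff.2 hW₀] with ω hω hgood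
  exact linearMMSE_block_lt (w := fun k => W k ω) hQ hα hσ (mul_pos hτ hp₀)
    (fun k => mul_one_sub_exceedanceDeficit_le hp₀ (hω k)) hr₁ hδ hgood

theorem stmt_1_general [Finite κ] [Nonempty n] (hU : Uᴴ * U = 1)
    (hb : ∀ k, #{i | b i = k} = Q) (hηL₀ : 0 < ηL)
    (hηL : ∀ i, ηL ≤ ∑ j, ‖U i j‖ ^ 2) (hηU : ∀ i, ∑ j, ‖U i j‖ ^ 2 ≤ ηU)
    {Px σ : ℝ} (hPx : 0 < Px) (hσ : 0 < σ) {W : κ → Ω → ℝ} (hW : ∀ k, Measurable (W k))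
    (hindep : iIndepFun W P) (hW₀ : ∀ k, ∀ᵐ ω ∂P, 0 ≤ W k ω) {p τ r : ℝ} (hτ : 0 ≤ τ)
    (hp : 0 < p) (hWp : ∀ k, P.real {ω | τ ≤ W k ω} = p) (hr₀ : 0 < r) (hr₁ : r ≤ 1 / ηU) :
    ENNReal.ofReal (1 - fbt (Fintype.card n) (1 / ηL * max (1 / p - 1) 1 * min (Q * ηU) 1)
        (1 / ηL ^ 2 * (1 / p - 1) * min (Q * ηU) 1) r) ≤
      P {ω | linearMMSE U (Fintype.card n / Px) σ (fun i => W (b i) ω /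
          ∑ l with b l = b i, Px / Fintype.card n * ∑ j, ‖U l j‖ ^ 2) <
        Px / (1 + 1 / σ * (1 / Q) * p * τ * (1 / ηU - r))} := by
  obtain ⟨i⟩ := nonempty_of_conjTranspose_mul_self_eq_one hU
  have hQ : 0 < Q := hb (b i) ▸ Finset.card_pos.2 ⟨i, by simp⟩
  have hcard : (0 : ℝ) < Fintype.card n := Nat.cast_pos.2 Fintype.card_pos
  have hp_le : p ≤ 1 := hWp (b i) ▸ measureReal_le_one
  rcases hp_le.eq_or_lt with rfl | hp_lt
  · have hfbt := one_le_fbt_zero (Fintype.card_pos (α := n))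
      (1 / ηL * max (1 / 1 - 1) 1 * min (Q * ηU) 1) r
    simp only [div_one, sub_self, mul_zero, zero_mul] at hfbt ⊢
    simp only [ENNReal.ofReal_of_nonpos (sub_nonpos.2 hfbt), zero_le]
  have hτ_pos : 0 < τ := hτ.lt_of_ne' fun hτ₀ => hp_lt.ne <| by
    rw [← hWp (b i), hτ₀]
    exact (measureReal_congr (Filter.eventuallyEq_univ.2 (hW₀ _))).trans probReal_univ
  have herr (D : ℝ) : Fintype.card n / (Fintype.card n / Px * D) = Px / D := by
    field_simp
  convert ofReal_one_sub_fbt_le_measure_linearMMSE_block_lt hU hb hQ hηL₀ hηL hηU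
    (div_pos hcard hPx) hσ hW hindep hW₀ hτ_pos hp hp_lt hWp hr₀ hr₁ using 5
  · simp only [inv_div, re_trace_blockGram, Finset.mul_sum]
  · rw [herr]
    ring_nf

end BlockTransmission

section Blocks

variable {nT Q : ℕ}

lemma sum_filter_blockOf_eq {M : Type*} [AddCommMonoid M] (f : Fin (nT * Q) → M) (k : Fin nT) :
    ∑ i with blockOf nT Q i = k, f i = ∑ t, f (blockIdx nT Q k t) := by
  rw [Finset.sum_filter, ← finProdFinEquiv.sum_comp, Fintype.sum_prod_type]
  simp [blockOf, blockIdx]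

lemma card_filter_blockOf_eq (k : Fin nT) : #{i | blockOf nT Q i = k} = Q := by
  rw [Finset.card_eq_sum_ones, sum_filter_blockOf_eq]
  simp

lemma blockIdx_injective (k : Fin nT) : Function.Injective (blockIdx nT Q k) := fun _ _ h =>
  (Prod.ext_iff.1 (finProdFinEquiv.injective h)).2

variable {Ω : Type*} [MeasurableSpace Ω] {P : Measure Ω} {E : Fin (nT * Q) → Ω → ℝ}

lemma identDistrib_sum_blockIdx (hindep : iIndepFun E P)
    (hident : ∀ i j, IdentDistrib (E i) (E j) P P) (k l : Fin nT) :
    IdentDistrib (fun ω => ∑ t, E (blockIdx nT Q k t) ω)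
      (fun ω => ∑ t, E (blockIdx nT Q l t) ω) P P :=
  (IdentDistrib.pi (fun _ => hident _ _) (hindep.precomp (blockIdx_injective k))
    (hindep.precomp (blockIdx_injective l))).comp (u := fun y : Fin Q → ℝ => ∑ t, y t) (by fun_prop)

variable [IsProbabilityMeasure P]

lemma iIndepFun_curry {ι κ β : Type*} [Countable ι] [Countable κ] [MeasurableSpace β]
    {X : ι × κ → Ω → β} (hX : ∀ i, Measurable (X i)) (hindep : iIndepFun X P) :
    iIndepFun (fun i ω j => X (i, j) ω) P := by
  have hlaw (i : ι × κ) : IsProbabilityMeasure (P.map (X i)) :=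
    Measure.isProbabilityMeasure_map (hX i).aemeasurable
  have hrow (i : ι) : P.map (fun ω j => X (i, j) ω) = .infinitePi fun j => P.map (X (i, j)) :=
    (hindep.precomp (Prod.mk_right_injective i)).map_fun_eq_infinitePi_map fun j => hX (i, j)
  rw [iIndepFun_iff_map_fun_eq_infinitePi_map fun i => measurable_pi_iff.2 fun j => hX (i, j)]
  simp only [hrow]
  rw [← Measure.infinitePi_map_curry (fun i j => P.map (X (i, j))),
    ← hindep.map_fun_eq_infinitePi_map hX,
    Measure.map_map (MeasurableEquiv.measurable _) (measurable_pi_iff.2 hX)]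
  rfl

lemma iIndepFun_sum_blockIdx (hE : ∀ i, Measurable (E i)) (hindep : iIndepFun E P) :
    iIndepFun (fun k ω => ∑ t, E (blockIdx nT Q k t) ω) P :=
  (iIndepFun_curry (fun _ => hE _) (hindep.precomp finProdFinEquiv.injective)).comp
    (fun _ y => ∑ t, y t) fun _ => by fun_prop

end Blocks

/-- Bound II for the energy-harvesting block-transmission model: with
`γ ∈ [0, Q·r_E]`, `p̄ = P(Ē_1 ≥ γ·μ_E) > 0`, for every `r ∈ (0, 1/η_U]`,
`P(ε < err_II) ≥ 1 − f_bt(μ_II, ϱ_II, r)` where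
`err_II = P_x/(1 + (1/σ_w²)(1/Q)·p̄·γ·μ_E·(1/η_U − r))`,
`μ_II = (1/η_L)·max{1/p̄ − 1, 1}·min{Q·η_U, 1}` and
`ϱ_II = (1/η_L²)·(1/p̄ − 1)·min{Q·η_U, 1}`. -/
theorem stmt_1
    {Ω : Type} [MeasureSpace Ω] [IsProbabilityMeasure (ℙ : Measure Ω)]
    (s nT Q : ℕ) (hs : 0 < s) (hnT : 0 < nT) (hQ : 0 < Q) (hsN : s ≤ nT * Q)
    (Us : Matrix (Fin (nT * Q)) (Fin s) ℂ) (hUs : Usᴴ * Us = 1)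
    (ηL ηU : ℝ) (hηL : ηL = ⨅ i, rowNormSq Us i) (hηU : ηU = ⨆ i, rowNormSq Us i)
    (hηLpos : 0 < ηL)
    (Px σw2 : ℝ) (hPx : 0 < Px) (hσ : 0 < σw2)
    (μE ϱE rE : ℝ) (hμE : 0 < μE) (hϱE : 0 < ϱE) (hrE : 1 ≤ rE)
    (E : Fin (nT * Q) → Ω → ℝ) (hEmeas : ∀ i, Measurable (E i))
    (hindep : iIndepFun E ℙ)
    (hident : ∀ i j, IdentDistrib (E i) (E j) ℙ ℙ)
    (hmean : ∀ i, ∫ ω, E i ω = μE)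
    (hvar : ∀ i, variance (E i) ℙ = ϱE)
    (hbdd : ∀ i, ∀ᵐ ω, 0 ≤ E i ω ∧ E i ω ≤ rE * μE)
    (S : Fin nT → ℝ)
    (hS : ∀ k, S k = ∑ t : Fin Q, Px / s * rowNormSq Us (blockIdx nT Q k t))
    (p : Fin nT → Ω → ℝ)
    (hp : ∀ k ω, p k ω = (∑ t : Fin Q, E (blockIdx nT Q k t) ω) / S k)
    (G : Ω → Matrix (Fin (nT * Q)) (Fin (nT * Q)) ℂ)
    (hG : ∀ ω, G ω = Matrix.diagonal fun i => ((p (blockOf nT Q i) ω : ℝ) : ℂ))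
    (ε : Ω → ℝ)
    (hε : ∀ ω, ε ω =
      ((((s / Px : ℝ) : ℂ) • (1 : Matrix (Fin s) (Fin s) ℂ) +
        ((σw2 : ℝ) : ℂ)⁻¹ • (Usᴴ * G ω * Us))⁻¹).trace.re)
    (γ : ℝ) (hγ0 : 0 ≤ γ) (hγ1 : γ ≤ Q * rE)
    (pbar : ℝ)
    (hpbar : pbar =
      (ℙ {ω | γ * μE ≤ ∑ t : Fin Q, E (blockIdx nT Q ⟨0, hnT⟩ t) ω}).toReal)
    (hpbarpos : 0 < pbar)
    (r : ℝ) (hr0 : 0 < r) (hr1 : r ≤ 1 / ηU)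
    (errII μII ϱII : ℝ)
    (herrII : errII = Px / (1 + 1 / σw2 * (1 / Q) * pbar * γ * μE * (1 / ηU - r)))
    (hμII : μII = 1 / ηL * max (1 / pbar - 1) 1 * min (Q * ηU) 1)
    (hϱII : ϱII = 1 / ηL ^ 2 * (1 / pbar - 1) * min (Q * ηU) 1) :
    ENNReal.ofReal (1 - fbt s μII ϱII r) ≤ ℙ {ω | ε ω < errII} := by
  have : NeZero s := ⟨hs.ne'⟩
  have hηL_le (i) : ηL ≤ rowNormSq Us i := hηL ▸ ciInf_le (Set.finite_range _).bddBelow i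
  have hle_ηU (i) : rowNormSq Us i ≤ ηU := hηU ▸ le_ciSup (Set.finite_range _).bddAbove i
  have hmeas (k : Fin nT) : Measurable fun ω => ∑ t, E (blockIdx nT Q k t) ω :=
    Finset.measurable_sum _ fun t _ => hEmeas _
  have hnonneg (k : Fin nT) : ∀ᵐ ω, 0 ≤ ∑ t, E (blockIdx nT Q k t) ω := by
    filter_upwards [ae_all_iff.2 hbdd] with ω hω
    exact Finset.sum_nonneg fun t _ => (hω _).1
  have hexceed (k : Fin nT) :
      (ℙ : Measure Ω).real {ω | γ * μE ≤ ∑ t, E (blockIdx nT Q k t) ω} = pbar :=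
    hpbar ▸ congrArg ENNReal.toReal
      ((identDistrib_sum_blockIdx hindep hident k ⟨0, hnT⟩).measure_mem_eq measurableSet_Ici)
  have hbound := stmt_1_general hUs card_filter_blockOf_eq hηLpos hηL_le hle_ηU hPx hσ hmeas
    (iIndepFun_sum_blockIdx hEmeas hindep) hnonneg (mul_nonneg hγ0 hμE.le) hpbarpos hexceed hr0 hr1
  simpa only [hε, hG, hp, hS, herrII, hμII, hϱII, linearMMSE, Fintype.card_fin,
    sum_filter_blockOf_eq, rowNormSq, ← mul_assoc] using hbound
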